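/- For every non-empty family 𝓕 of finite graphs, each having at least one edge, there exists a constant C such that sat(n,𝓕) ≤ C·n for every integer n ≥ 1. -/

import Mathlib

open SimpleGraph Filter Topology

/-- `H` (on `β`) is contained in `G` (on `α`): `G` has a subgraph isomorphic to `H`. -/
def Contains {α β : Type*} (G : SimpleGraph α) (H : SimpleGraph β) : Prop :=
  ∃ f : β ↪ α, ∀ a b : β, H.Adj a b → G.Adj (f a) (f b)

/-- A family of finite graphs, each given on a vertex set `Fin n`. -/
abbrev GraphFam := Set ((n : ℕ) × SimpleGraph (Fin n))

/-- `G` is `𝓕`-saturated: `G` contains no member of `𝓕`, but adding any missing edge to `G`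
creates a member of `𝓕`. -/
def FamSaturated (𝓕 : GraphFam) {α : Type*} (G : SimpleGraph α) : Prop :=
  (∀ F ∈ 𝓕, ¬ Contains G F.2) ∧
    ∀ u v : α, u ≠ v → ¬ G.Adj u v →
      ∃ F ∈ 𝓕, Contains (G ⊔ SimpleGraph.fromEdgeSet {s(u, v)}) F.2

/-- `sat n 𝓕` is the minimum number of edges in an `𝓕`-saturated graph on `n` vertices. -/
noncomputable def sat (n : ℕ) (𝓕 : GraphFam) : ℕ :=
  sInf {m | ∃ G : SimpleGraph (Fin n), FamSaturated 𝓕 G ∧ Nat.card G.edgeSet = m}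

/-!
Let `u + 1` be the least vertex cover number of a member of `𝓕`, attained by `F`. A graph in which
`u` vertices are joined to everything and the others are independent has vertex cover number at
most `u`, so it contains no member of `𝓕` and extends to an `𝓕`-saturated graph `G`. If some vertex
`v` outside the `u` special ones had `|F|` neighbours outside them, then `v` and the special
vertices would host a minimum vertex cover of `F` and these neighbours the rest of `F`. So every
non-special vertex of `G` has degree less than `u + |F|`, and `G` has linearly many edges.
-/

variable {V W : Type*} {G : SimpleGraph V} {H : SimpleGraph W}

lemma contains_iff_isContained : Contains G H ↔ H ⊑ G :=
  ⟨fun ⟨f, hf⟩ => ⟨⟨⟨f, hf _ _⟩, f.injective⟩⟩,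
    fun ⟨f⟩ => ⟨f.toEmbedding, fun _ _ => f.toHom.map_adj⟩⟩

lemma exists_vertexCoverNum_eq_add_one [Finite V] (hG : G ≠ ⊥) :
    ∃ u : ℕ, vertexCoverNum G = u + 1 := by
  obtain ⟨k, hk⟩ := ENat.ne_top_iff_exists.1 (vertexCoverNum_ne_top_of_finite (G := G))
  have hk0 : k ≠ 0 := by
    rintro rfl
    exact hG (vertexCoverNum_eq_zero.1 hk.symm)
  obtain ⟨u, rfl⟩ := Nat.exists_eq_add_one_of_ne_zero hk0
  exact ⟨u, by simp [← hk]⟩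

/-- The complete split graph with clique part `A`: the largest graph with vertex cover `A`, in which
each vertex of `A` is adjacent to all other vertices. It is the starting point for building sparse
saturated graphs. -/
def completeSplitGraph (A : Set V) : SimpleGraph V :=
  SimpleGraph.fromRel fun a _ => a ∈ A

lemma completeSplitGraph_adj {A : Set V} {a b : V} :
    (completeSplitGraph A).Adj a b ↔ a ≠ b ∧ (a ∈ A ∨ b ∈ A) :=
  SimpleGraph.fromRel_adj _ a b

lemma vertexCoverNum_completeSplitGraph_le (A : Set V) :
    vertexCoverNum (completeSplitGraph A) ≤ A.encard :=
  IsVertexCover.vertexCoverNum_le fun _ _ hab => (completeSplitGraph_adj.1 hab).2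

lemma isClique_insert_of_completeSplitGraph_le {A : Set V} (hG : completeSplitGraph A ≤ G) (v : V) :
    G.IsClique (insert v A) := by
  rintro a (rfl | ha) b (rfl | hb) hab
  · exact absurd rfl hab
  · exact hG (completeSplitGraph_adj.2 ⟨hab, .inr hb⟩)
  all_goals exact hG (completeSplitGraph_adj.2 ⟨hab, .inl ha⟩)

lemma nonempty_embedding_of_encard_le {s : Set V} {t : Set W} [Countable s]
    (hst : s.encard ≤ t.encard) : Nonempty (s ↪ t) := by
  rw [← Cardinal.lift_mk_le', ← Cardinal.toENat_le_iff_of_le_aleph0 (by simp),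
    Cardinal.toENat_lift, Cardinal.toENat_lift]
  exact hst

lemma isContained_of_isVertexCover [Countable W] {S : Set W} {T N : Set V} (hS : H.IsVertexCover S)
    (hT : G.IsClique T) (hTN : ∀ t ∈ T, ∀ w ∈ N, G.Adj t w)
    (hST : S.encard ≤ T.encard) (hSN : Sᶜ.encard ≤ N.encard) : H ⊑ G := by
  classical
  obtain ⟨e⟩ : Nonempty (S ↪ T) := nonempty_embedding_of_encard_le hST
  obtain ⟨g⟩ : Nonempty (↥Sᶜ ↪ N) := nonempty_embedding_of_encard_le hSN
  let f : W → V := fun x => if hx : x ∈ S then e ⟨x, hx⟩ else g ⟨x, hx⟩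
  have f_mem {x} (hx : x ∈ S) : f x ∈ T := by simp [f, hx]
  have f_mem_compl {x} (hx : x ∉ S) : f x ∈ N := by simp [f, hx]
  have f_injective : Function.Injective f :=
    Function.Injective.dite _ (Subtype.val_injective.comp e.injective)
      (Subtype.val_injective.comp g.injective)
      (fun {_ _ _ _} heq => (hTN _ (e _).2 _ (g _).2).ne heq)
  have f_adj {a b} (ha : a ∈ S) (hab : a ≠ b) : G.Adj (f a) (f b) := by
    by_cases hb : b ∈ S
    · exact hT (f_mem ha) (f_mem hb) (f_injective.ne hab)
    · exact hTN _ (f_mem ha) _ (f_mem_compl hb)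
  refine ⟨⟨f, fun {a b} hab => ?_⟩, f_injective⟩
  rcases hS hab with ha | hb
  · exact f_adj ha hab.ne
  · exact (f_adj hb hab.ne').symm

lemma degree_lt_of_completeSplitGraph_le [Finite W] {A : Finset V} (hG : completeSplitGraph A ≤ G)
    (hfree : H.Free G) (hH : vertexCoverNum H ≤ A.card + 1) {v : V} (hv : v ∉ A)
    [Fintype (G.neighborSet v)] : G.degree v < A.card + Nat.card W := by
  classical
  suffices hN : (G.neighborFinset v \ A).card < Nat.card W by
    have := Finset.card_le_card_sdiff_add_card (s := G.neighborFinset v) (t := A)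
    rw [card_neighborFinset_eq_degree] at this
    omega
  by_contra! hN
  obtain ⟨S, hScard, hS⟩ := vertexCoverNum_exists H
  refine hfree (isContained_of_isVertexCover (N := ↑(G.neighborFinset v \ A)) hS
    (isClique_insert_of_completeSplitGraph_le hG v) ?_ ?_ ?_)
  · intro t ht w hw
    obtain ⟨hvw, hwA⟩ : G.Adj v w ∧ w ∉ A := by simpa using hw
    rcases ht with rfl | ht
    · exact hvw
    · exact hG (completeSplitGraph_adj.2 ⟨ne_of_mem_of_not_mem ht hwA, .inl ht⟩)
  · rwa [hScard, Set.encard_insert_of_notMem (by simpa using hv), Set.encard_coe_eq_coe_finsetCard]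
  · calc Sᶜ.encard ≤ ENat.card W := Set.encard_le_card
      _ = Nat.card W := ENat.card_eq_coe_natCard W
      _ ≤ (G.neighborFinset v \ A).card := by exact_mod_cast hN
      _ = _ := (Set.encard_coe_eq_coe_finsetCard _).symm

lemma two_mul_card_edgeFinset_le_of_degree_le [Fintype V] [DecidableRel G.Adj] {A : Finset V}
    {d : ℕ} (h : ∀ v ∉ A, G.degree v ≤ d) :
    2 * G.edgeFinset.card ≤ (A.card + d) * Fintype.card V := by
  classical
  calc 2 * G.edgeFinset.card = ∑ v ∈ A, G.degree v + ∑ v ∈ Aᶜ, G.degree v := by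
        rw [← sum_degrees_eq_twice_card_edges, Finset.sum_add_sum_compl]
    _ ≤ A.card * Fintype.card V + Aᶜ.card * d :=
        add_le_add (Finset.sum_le_card_nsmul _ _ _ fun v _ => (G.degree_lt_card_verts v).le)
          (Finset.sum_le_card_nsmul _ _ _ fun v hv => h v (Finset.mem_compl.1 hv))
    _ ≤ A.card * Fintype.card V + Fintype.card V * d := by gcongr; exact Finset.card_le_univ _
    _ = (A.card + d) * Fintype.card V := by ring

lemma exists_famSaturated_ge {𝓕 : GraphFam} [Finite V] (h : ∀ F ∈ 𝓕, ¬ Contains G F.2) :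
    ∃ G', G ≤ G' ∧ FamSaturated 𝓕 G' := by
  obtain ⟨G', hle, hmax⟩ :=
    Finite.exists_le_maximal (p := fun G' : SimpleGraph V => ∀ F ∈ 𝓕, ¬ Contains G' F.2) h
  refine ⟨G', hle, hmax.prop, fun u v huv hadj => ?_⟩
  by_contra! hfree
  exact hadj (hmax.le_of_ge hfree le_sup_left (by simp [huv]))

lemma exists_famSaturated_ge_completeSplitGraph {𝓕 : GraphFam} [Finite V] {A : Set V}
    (h : ∀ F ∈ 𝓕, A.encard < vertexCoverNum F.2) :
    ∃ G, completeSplitGraph A ≤ G ∧ FamSaturated 𝓕 G :=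
  exists_famSaturated_ge fun F hF hcon => (h F hF).not_ge <|
    (contains_iff_isContained.1 hcon).vertexCoverNum_le_vertexCoverNum.trans
      (vertexCoverNum_completeSplitGraph_le A)

lemma sat_le_of_lt_vertexCoverNum {𝓕 : GraphFam} {u : ℕ} (hu : ∀ F ∈ 𝓕, u < vertexCoverNum F.2)
    {F : (k : ℕ) × SimpleGraph (Fin k)} (hF : F ∈ 𝓕) (hFu : vertexCoverNum F.2 ≤ u + 1) (n : ℕ) :
    sat n 𝓕 ≤ (u + F.1) * n := by
  classical
  -- If `n < u`, then `A` is the whole vertex set and no degree has to be bounded.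
  obtain ⟨A, -, hA⟩ : ∃ A ⊆ (Finset.univ : Finset (Fin n)), A.card = min u n :=
    Finset.exists_subset_card_eq (by simp)
  have hAu : A.card ≤ u := hA.trans_le (min_le_left u n)
  obtain ⟨G, hle, hG⟩ := exists_famSaturated_ge_completeSplitGraph (𝓕 := 𝓕) (A := (A : Set (Fin n)))
    fun F' hF' => lt_of_le_of_lt (by simpa using hAu) (hu F' hF')
  have hdeg : ∀ v ∉ A, G.degree v ≤ u + F.1 := fun v hv => by
    have hAcard : A.card = u := by
      have := Finset.card_lt_univ_of_notMem hv
      rw [Fintype.card_fin] at this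
      omega
    have hfree : F.2.Free G := mt contains_iff_isContained.2 (hG.1 F hF)
    simpa [hAcard] using (degree_lt_of_completeSplitGraph_le hle hfree (by rwa [hAcard]) hv).le
  have hedges : 2 * G.edgeFinset.card ≤ 2 * ((u + F.1) * n) :=
    calc 2 * G.edgeFinset.card ≤ (A.card + (u + F.1)) * n := by
          simpa using two_mul_card_edgeFinset_le_of_degree_le hdeg
      _ ≤ ((u + F.1) + (u + F.1)) * n := by gcongr; omega
      _ = 2 * ((u + F.1) * n) := by ring
  calc sat n 𝓕 ≤ Nat.card G.edgeSet := Nat.sInf_le ⟨G, hG, rfl⟩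
    _ = G.edgeFinset.card := by rw [Nat.card_eq_fintype_card, edgeFinset_card]
    _ ≤ (u + F.1) * n := by omega

/-- `sat(n,𝓕) = O(n)`: for every non-empty family of graphs each having at least one edge,
there is a constant `C` with `sat(n,𝓕) ≤ C·n` for all `n ≥ 1`. -/
theorem stmt2 (𝓕 : GraphFam) (h1 : 𝓕.Nonempty) (h2 : ∀ F ∈ 𝓕, 1 ≤ Nat.card F.2.edgeSet) :
    ∃ C : ℝ, ∀ n : ℕ, 1 ≤ n → (sat n 𝓕 : ℝ) ≤ C * n := by
  let τ : ((k : ℕ) × SimpleGraph (Fin k)) → ℕ∞ := fun F => vertexCoverNum F.2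
  obtain ⟨F, hF, hmin⟩ : ∃ F ∈ 𝓕, ∀ F' ∈ 𝓕, τ F ≤ τ F' :=
    ⟨Function.argminOn τ 𝓕 h1, Function.argminOn_mem τ 𝓕 h1,
      fun _ hF' => Function.argminOn_le τ 𝓕 hF'⟩
  have hFbot : F.2 ≠ ⊥ := fun hbot => by simpa [hbot] using h2 F hF
  obtain ⟨u, hu⟩ := exists_vertexCoverNum_eq_add_one hFbot
  have hlt : ∀ F' ∈ 𝓕, u < vertexCoverNum F'.2 := fun F' hF' =>
    (ENat.add_one_le_iff (ENat.natCast_ne_top u)).1 (hu.symm.trans_le (hmin F' hF'))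
  exact ⟨(u + F.1 : ℕ), fun n _ => by exact_mod_cast sat_le_of_lt_vertexCoverNum hlt hF hu.le n⟩
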